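/- S^H_χ is a free A-module with basis {x₁, x₂x₃, x₁³, x₁x₂², x₂³x₃, x₁³x₂²}: every χ-relative H-invariant f ∈ S can be written uniquely as f = p₁(a₁,a₂,a₃)·x₁ + p₂(a₁,a₂,a₃)·x₂x₃ + p₃(a₁,a₂,a₃)·x₁³ + p₄(a₁,a₂,a₃)·x₁x₂² + p₅(a₁,a₂,a₃)·x₂³x₃ + p₆(a₁,a₂,a₃)·x₁³x₂² with p₁,…,p₆ ∈ 𝔽₃[T₁,T₂,T₃], and conversely every element of this form is a χ-relative H-invariant. -/

import Mathlib

open Matrix MvPolynomial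

set_option synthInstance.maxHeartbeats 1000000
set_option maxHeartbeats 1000000

abbrev F3 : Type := ZMod 3
abbrev G3 : Type := Matrix.SpecialLinearGroup (Fin 2) F3
abbrev S3 : Type := MvPolynomial (Fin 3) F3

/-- The fixed basis `v₁, v₂, v₃` of the traceless `2 × 2` matrices over `𝔽₃`. -/
def V : Fin 3 → Matrix (Fin 2) (Fin 2) F3 :=
  ![!![0, 1; -1, 0], !![-1, -1; -1, 1], !![1, -1; -1, -1]]

/-- Coordinates of a traceless matrix with respect to the basis `v₁, v₂, v₃`. -/
def coordM : Fin 3 → Matrix (Fin 2) (Fin 2) F3 → F3 :=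
  ![fun X => X 1 0 - X 0 1, fun X => X 0 0 - X 0 1 - X 1 0, fun X => -(X 0 0 + X 0 1 + X 1 0)]

/-- Matrix of the (dual) action of `g` on `M*`: `g • x_s = ∑ r, (rep g) s r • x_r`, where
`(rep g) s r = x_s (g⁻¹ • v_r) = coordM s (g⁻¹ vᵣ g)`, coming from `(g • f)(v) = f(g⁻¹ • v)`. -/
def rep (g : G3) : Matrix (Fin 3) (Fin 3) F3 :=
  Matrix.of fun s r => coordM s ((g⁻¹ : G3) * V r * (g : Matrix (Fin 2) (Fin 2) F3))

/-- The action of `g ∈ SL₂(𝔽₃)` on `S = 𝔽₃[x₁,x₂,x₃]` by algebra automorphisms, given by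
substituting `x_s ↦ g • x_s = ∑ r, (rep g) s r • x_r`. -/
noncomputable def actS (g : G3) : S3 →ₐ[F3] S3 :=
  MvPolynomial.aeval fun s => ∑ r : Fin 3, rep g s r • MvPolynomial.X r

noncomputable def a1 : S3 := X 0 ^ 2 + X 1 ^ 2 + X 2 ^ 2
noncomputable def a2 : S3 := X 0 * X 1 * X 2
noncomputable def a3 : S3 := X 0 ^ 4 + X 1 ^ 4 + X 2 ^ 4
noncomputable def bP : S3 := X 0 ^ 4 * X 1 ^ 2 + X 0 ^ 2 * X 2 ^ 4 + X 1 ^ 4 * X 2 ^ 2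
noncomputable def av : Fin 3 → S3 := ![a1, a2, a3]

def tm : G3 := ⟨!![1, 1; 0, 1], by decide⟩
def im : G3 := ⟨!![0, 1; -1, 0], by decide⟩
def jm : G3 := ⟨!![1, -1; -1, -1], by decide⟩

/-- The quaternion subgroup `H = ⟨i, j⟩ ≅ Q₈` of `SL₂(𝔽₃)`. -/
def H3 : Subgroup G3 := Subgroup.closure {im, jm}

/-- The character with `χ(±e) = χ(±i) = 1` and `χ(±j) = χ(±k) = -1` (its values off the
set `{±e, ±i}` are `-1`; only the restriction to `H` is ever used). -/
def chi (g : G3) : F3 :=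
  if (g : Matrix (Fin 2) (Fin 2) F3) = 1 ∨ (g : Matrix (Fin 2) (Fin 2) F3) = -1 ∨
     (g : Matrix (Fin 2) (Fin 2) F3) = (im : Matrix (Fin 2) (Fin 2) F3) ∨
     (g : Matrix (Fin 2) (Fin 2) F3) = -(im : Matrix (Fin 2) (Fin 2) F3) then 1 else -1

/-- The `𝔽₃`-submodule `S^H_χ` of `χ`-relative `H`-invariants in `S`. -/
noncomputable def relInv : Submodule F3 S3 where
  carrier := {f | ∀ h ∈ H3, actS h f = chi h • f}
  add_mem' := by
    intro f g hf hg h hh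
    rw [map_add, hf h hh, hg h hh, smul_add]
  zero_mem' := by
    intro h hh
    rw [map_zero, smul_zero]
  smul_mem' := by
    intro c f hf h hh
    rw [_root_.map_smul, hf h hh, smul_comm]

/-- The six module generators `x₁, x₂x₃, x₁³, x₁x₂², x₂³x₃, x₁³x₂²`. -/
noncomputable def w7 : Fin 6 → S3 :=
  ![X 0, X 1 * X 2, X 0 ^ 3, X 0 * X 1 ^ 2, X 1 ^ 3 * X 2, X 0 ^ 3 * X 1 ^ 2]

/-- `Ψ(p₁,…,p₆) = ∑ᵢ pᵢ(a₁,a₂,a₃) · wᵢ`. -/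
noncomputable def Psi7 (p : Fin 6 → MvPolynomial (Fin 3) F3) : S3 :=
  ∑ i : Fin 6, aeval av (p i) * w7 i

/-- A diagonal description of the action of an element of `H`: signs with product `1` whose first
entry is the value of `χ`. -/
def IsDiagonalWithSigns (g : G3) (u : Fin 3 → F3) : Prop :=
  rep g = Matrix.diagonal u ∧ u 0 ^ 2 = 1 ∧ u 1 ^ 2 = 1 ∧ u 2 ^ 2 = 1 ∧
    u 0 * u 1 * u 2 = 1 ∧ chi g = u 0

instance (g : G3) (u : Fin 3 → F3) : Decidable (IsDiagonalWithSigns g u) := by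
  unfold IsDiagonalWithSigns; infer_instance

theorem three_eq_zero_S3 : (3 : S3) = 0 := CharP.cast_eq_zero S3 3

/-- The elements of the quaternion group `H`. -/
theorem mem_H3_cases {h : G3} (hh : h ∈ H3) :
    h ∈ ({1, -1, im, -im, jm, -jm, im * jm, -(im * jm)} : Finset G3) := by
  induction hh using Subgroup.closure_induction with
  | mem x hx =>
    rcases hx with rfl | rfl <;> decide
  | one => decide
  | mul x y _ _ hx hy =>
    revert x y
    have key : ∀ x ∈ ({1, -1, im, -im, jm, -jm, im * jm, -(im * jm)} : Finset G3),
        ∀ y ∈ ({1, -1, im, -im, jm, -jm, im * jm, -(im * jm)} : Finset G3),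
        x * y ∈ ({1, -1, im, -im, jm, -jm, im * jm, -(im * jm)} : Finset G3) := by decide
    exact fun x y _ _ hx hy => key x hx y hy
  | inv x _ hx =>
    have key : ∀ x ∈ ({1, -1, im, -im, jm, -jm, im * jm, -(im * jm)} : Finset G3),
        x⁻¹ ∈ ({1, -1, im, -im, jm, -jm, im * jm, -(im * jm)} : Finset G3) := by decide
    exact key x hx

theorem isDiagonalWithSigns_im : IsDiagonalWithSigns im ![1, -1, -1] := by decide

theorem isDiagonalWithSigns_jm : IsDiagonalWithSigns jm ![-1, -1, 1] := by decide

theorem exists_isDiagonalWithSigns {h : G3} (hh : h ∈ H3) :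
    ∃ u, IsDiagonalWithSigns h u := by
  have hc := mem_H3_cases hh
  simp only [Finset.mem_insert, Finset.mem_singleton] at hc
  rcases hc with rfl | rfl | rfl | rfl | rfl | rfl | rfl | rfl
  · exact ⟨![1, 1, 1], by decide⟩
  · exact ⟨![1, 1, 1], by decide⟩
  · exact ⟨_, isDiagonalWithSigns_im⟩
  · exact ⟨![1, -1, -1], by decide⟩
  · exact ⟨_, isDiagonalWithSigns_jm⟩
  · exact ⟨![-1, -1, 1], by decide⟩
  · exact ⟨![-1, 1, -1], by decide⟩
  · exact ⟨![-1, 1, -1], by decide⟩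

theorem actS_X {g : G3} {u : Fin 3 → F3} (hu : IsDiagonalWithSigns g u) (s : Fin 3) :
    actS g (X s) = C (u s) * X s := by
  simp [actS, hu.1, Matrix.diagonal_apply, MvPolynomial.smul_eq_C_mul]

theorem actS_monomial {g : G3} {u : Fin 3 → F3} (hu : IsDiagonalWithSigns g u)
    (d : Fin 3 →₀ ℕ) (c : F3) :
    actS g (monomial d c) = monomial d (c * (u 0 ^ d 0 * u 1 ^ d 1 * u 2 ^ d 2)) := by
  have hX : ∀ c : F3, (monomial d c : S3) = C c * (X 0 ^ d 0 * X 1 ^ d 1 * X 2 ^ d 2) := by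
    intro c
    rw [monomial_eq, Finsupp.prod_fintype _ _ (by simp), Fin.prod_univ_three]
  rw [hX, hX]
  simp only [map_mul, map_pow, actS_X hu, algHom_C, algebraMap_eq]
  ring

theorem coeff_actS {g : G3} {u : Fin 3 → F3} (hu : IsDiagonalWithSigns g u)
    (f : S3) (d : Fin 3 →₀ ℕ) :
    coeff d (actS g f) = coeff d f * (u 0 ^ d 0 * u 1 ^ d 1 * u 2 ^ d 2) := by
  induction f using MvPolynomial.induction_on' with
  | monomial e c =>
    rw [actS_monomial hu, coeff_monomial, coeff_monomial]
    split_ifs with h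
    · rw [h]
    · simp
  | add p q hp hq => rw [map_add, coeff_add, coeff_add, hp, hq, add_mul]

/-- The monomials that occur in a relative invariant lie in `x₁ F₃[x²] ⊕ x₂x₃ F₃[x²]`. -/
theorem parity_of_mem_support {f : S3} (hf : ∀ h ∈ H3, actS h f = chi h • f)
    {d : Fin 3 →₀ ℕ} (hd : d ∈ f.support) :
    (∃ k l m, d 0 = 2 * k + 1 ∧ d 1 = 2 * l ∧ d 2 = 2 * m) ∨
      (∃ k l m, d 0 = 2 * k ∧ d 1 = 2 * l + 1 ∧ d 2 = 2 * m + 1) := by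
  have hd0 : coeff d f ≠ 0 := mem_support_iff.mp hd
  have key : ∀ {g : G3} {u : Fin 3 → F3}, g ∈ H3 → IsDiagonalWithSigns g u →
      u 0 ^ d 0 * u 1 ^ d 1 * u 2 ^ d 2 = u 0 := by
    intro g u hg hu
    have h := congrArg (coeff d) (hf g hg)
    rw [coeff_actS hu, coeff_smul, hu.2.2.2.2.2, smul_eq_mul, mul_comm (u 0)] at h
    exact mul_left_cancel₀ hd0 h
  have hi := key (Subgroup.subset_closure (by simp)) isDiagonalWithSigns_im
  have hj := key (Subgroup.subset_closure (by simp)) isDiagonalWithSigns_jm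
  have hne : (1 : F3) ≠ -1 := by decide
  rcases Nat.even_or_odd' (d 0) with ⟨k, hk | hk⟩ <;>
  rcases Nat.even_or_odd' (d 1) with ⟨l, hl | hl⟩ <;>
  rcases Nat.even_or_odd' (d 2) with ⟨m, hm | hm⟩ <;>
  simp [hk, hl, hm, pow_succ, pow_mul, hne, hne.symm] at hi hj ⊢

theorem av_zero : av 0 = X 0 ^ 2 + X 1 ^ 2 + X 2 ^ 2 := rfl

theorem av_one : av 1 = X 0 * X 1 * X 2 := rfl

theorem av_two : av 2 = X 0 ^ 4 + X 1 ^ 4 + X 2 ^ 4 := rfl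

/-- An algebra endomorphism that fixes `a₁, a₂, a₃` fixes `A`. -/
theorem map_aeval_av {φ : S3 →ₐ[F3] S3} (hφ : ∀ i, φ (av i) = av i)
    (p : MvPolynomial (Fin 3) F3) : φ (aeval av p) = aeval av p := by
  rw [← AlgHom.comp_apply, comp_aeval]
  simp only [hφ]

theorem Psi7_relInv (p : Fin 6 → MvPolynomial (Fin 3) F3) {h : G3} (hh : h ∈ H3) :
    actS h (Psi7 p) = chi h • Psi7 p := by
  obtain ⟨u, hu⟩ := exists_isDiagonalWithSigns hh
  have hX := actS_X hu
  obtain ⟨-, h0, h1, h2, h012, hchi⟩ := hu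
  replace h0 := congrArg (C (σ := Fin 3)) h0
  replace h1 := congrArg (C (σ := Fin 3)) h1
  replace h2 := congrArg (C (σ := Fin 3)) h2
  replace h012 := congrArg (C (σ := Fin 3)) h012
  simp only [map_mul, map_pow, map_one] at h0 h1 h2 h012
  have h12 : (C (u 1) * C (u 2) : S3) = C (u 0) := by
    linear_combination C (u 0) * h012 - C (u 1) * C (u 2) * h0
  have hav : ∀ i, actS h (av i) = av i := by
    intro i
    fin_cases i
    · simp only [Fin.zero_eta, av_zero, map_add, map_pow, hX, mul_pow, h0, h1, h2, one_mul]
    · simp only [Fin.mk_one, av_one, map_mul, hX]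
      linear_combination (X 0 * X 1 * X 2 : S3) * h012
    · simp only [Fin.reduceFinMk, av_two, map_add, map_pow, hX, mul_pow]
      linear_combination (X 0 ^ 4 : S3) * (C (u 0) ^ 2 + 1) * h0 +
        (X 1 ^ 4 : S3) * (C (u 1) ^ 2 + 1) * h1 + (X 2 ^ 4 : S3) * (C (u 2) ^ 2 + 1) * h2
  have hw : ∀ i, actS h (w7 i) = C (u 0) * w7 i := by
    intro i
    fin_cases i <;> simp [w7, hX]
    · linear_combination (X 1 * X 2 : S3) * h12
    · linear_combination (X 0 ^ 3 * C (u 0) : S3) * h0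
    · linear_combination (X 0 * X 1 ^ 2 * C (u 0) : S3) * h1
    · linear_combination (X 1 ^ 3 * X 2 : S3) * (C (u 1) ^ 2 * h12 + C (u 0) * h1)
    · linear_combination (X 0 ^ 3 * X 1 ^ 2 * C (u 0) : S3) * (C (u 1) ^ 2 * h0 + h1)
  rw [Psi7, map_sum, hchi, Finset.smul_sum]
  refine Finset.sum_congr rfl fun i _ => ?_
  rw [map_mul, map_aeval_av hav, hw, smul_eq_C_mul]
  ring

/-- The elementary symmetric polynomial of degree two in `x₁², x₂², x₃²` lies in `A`. -/
theorem av_two_sub_av_zero_sq :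
    av 2 - av 0 ^ 2 = X 0 ^ 2 * X 1 ^ 2 + X 0 ^ 2 * X 2 ^ 2 + X 1 ^ 2 * X 2 ^ 2 := by
  rw [av_two, av_zero]
  linear_combination
    -(X 0 ^ 2 * X 1 ^ 2 + X 0 ^ 2 * X 2 ^ 2 + X 1 ^ 2 * X 2 ^ 2) * three_eq_zero_S3

theorem Psi7_eq (p : Fin 6 → MvPolynomial (Fin 3) F3) :
    Psi7 p = aeval av (p 0) * X 0 + aeval av (p 1) * (X 1 * X 2) + aeval av (p 2) * X 0 ^ 3 +
      aeval av (p 3) * (X 0 * X 1 ^ 2) + aeval av (p 4) * (X 1 ^ 3 * X 2) +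
      aeval av (p 5) * (X 0 ^ 3 * X 1 ^ 2) := by
  simp [Psi7, Fin.sum_univ_six, w7]

theorem X_zero_sq_mul_mem {f : S3} (hf : f ∈ Set.range Psi7) : X 0 ^ 2 * f ∈ Set.range Psi7 := by
  obtain ⟨p, rfl⟩ := hf
  refine ⟨![p 1 * X 1 - p 2 * (X 2 - X 0 ^ 2), p 2 * X 1, p 0 + p 2 * X 0,
    p 4 * X 1 - p 5 * (X 2 - X 0 ^ 2), p 5 * X 1, p 3 + p 5 * X 0], ?_⟩
  simp only [Psi7_eq, Matrix.cons_val, map_add, map_sub, map_mul, map_pow, aeval_X,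
    av_two_sub_av_zero_sq]
  rw [av_zero, av_one]
  ring

theorem X_one_sq_mul_mem {f : S3} (hf : f ∈ Set.range Psi7) : X 1 ^ 2 * f ∈ Set.range Psi7 := by
  obtain ⟨p, rfl⟩ := hf
  refine ⟨![p 4 * X 0 * X 1 - p 5 * X 1 ^ 2, -p 3 * X 1 - p 4 * (X 2 - X 0 ^ 2), -p 4 * X 1,
    p 0 + p 3 * X 0 - p 4 * X 1 + p 5 * (X 2 - X 0 ^ 2), p 1 + p 4 * X 0 - p 5 * X 1,
    p 2 - p 3], ?_⟩
  simp only [Psi7_eq, Matrix.cons_val, map_add, map_sub, map_neg, map_mul, map_pow, aeval_X,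
    av_two_sub_av_zero_sq]
  rw [av_zero, av_one]
  ring

theorem Psi7_add (p q : Fin 6 → MvPolynomial (Fin 3) F3) : Psi7 (p + q) = Psi7 p + Psi7 q := by
  simp [Psi7, add_mul, Finset.sum_add_distrib]

theorem Psi7_sub (p q : Fin 6 → MvPolynomial (Fin 3) F3) : Psi7 (p - q) = Psi7 p - Psi7 q := by
  simp [Psi7, sub_mul, Finset.sum_sub_distrib]

theorem aeval_av_mul_mem (q : MvPolynomial (Fin 3) F3) {f : S3} (hf : f ∈ Set.range Psi7) :
    aeval av q * f ∈ Set.range Psi7 := by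
  obtain ⟨p, rfl⟩ := hf
  exact ⟨fun i => q * p i, by simp [Psi7, Finset.mul_sum, mul_assoc]⟩

theorem X_two_sq_mul_mem {f : S3} (hf : f ∈ Set.range Psi7) : X 2 ^ 2 * f ∈ Set.range Psi7 := by
  obtain ⟨p, hp⟩ := aeval_av_mul_mem (X 0) hf
  obtain ⟨q, hq⟩ := X_zero_sq_mul_mem hf
  obtain ⟨r, hr⟩ := X_one_sq_mul_mem hf
  refine ⟨p - q - r, ?_⟩
  rw [Psi7_sub, Psi7_sub, hp, hq, hr, aeval_X, av_zero]
  ring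

theorem sq_pow_mul_mem {f : S3} (hf : f ∈ Set.range Psi7) (k l m : ℕ) :
    (X 0 ^ 2) ^ k * ((X 1 ^ 2) ^ l * ((X 2 ^ 2) ^ m * f)) ∈ Set.range Psi7 := by
  have iter : ∀ y : S3, (∀ {g : S3}, g ∈ Set.range Psi7 → y * g ∈ Set.range Psi7) →
      ∀ (n : ℕ) {g : S3}, g ∈ Set.range Psi7 → y ^ n * g ∈ Set.range Psi7 := by
    intro y hy n
    induction n with
    | zero => intro g hg; simpa using hg
    | succ n ih => intro g hg; rw [pow_succ, mul_assoc]; exact ih (hy hg)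
  exact iter _ X_zero_sq_mul_mem _ (iter _ X_one_sq_mul_mem _ (iter _ X_two_sq_mul_mem _ hf))

theorem mem_range_Psi7 {f : S3} (hf : ∀ h ∈ H3, actS h f = chi h • f) : f ∈ Set.range Psi7 := by
  have h0 : (X 0 : S3) ∈ Set.range Psi7 := ⟨![1, 0, 0, 0, 0, 0], by simp [Psi7_eq]⟩
  have h1 : (X 1 * X 2 : S3) ∈ Set.range Psi7 := ⟨![0, 1, 0, 0, 0, 0], by simp [Psi7_eq]⟩
  rw [f.as_sum]
  refine Finset.sum_induction _ (· ∈ Set.range Psi7) ?_ ⟨0, by simp [Psi7]⟩ ?_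
  · rintro _ _ ⟨p, rfl⟩ ⟨q, rfl⟩
    exact ⟨p + q, Psi7_add p q⟩
  intro d hd
  rw [monomial_eq, Finsupp.prod_fintype _ _ (by simp), Fin.prod_univ_three]
  rcases parity_of_mem_support hf hd with ⟨k, l, m, hk, hl, hm⟩ | ⟨k, l, m, hk, hl, hm⟩
  · convert aeval_av_mul_mem (C (coeff d f)) (sq_pow_mul_mem h0 k l m) using 1
    rw [hk, hl, hm, aeval_C, algebraMap_eq]
    ring
  · convert aeval_av_mul_mem (C (coeff d f)) (sq_pow_mul_mem h1 k l m) using 1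
    rw [hk, hl, hm, aeval_C, algebraMap_eq]
    ring

theorem isIntegral_adjoin_av (f : S3) : IsIntegral (Algebra.adjoin F3 (Set.range av)) f := by
  have hX : ∀ i, IsIntegral (Algebra.adjoin F3 (Set.range av)) (X i : S3) := by
    intro i
    let b (j : Fin 3) : Algebra.adjoin F3 (Set.range av) :=
      ⟨av j, Algebra.subset_adjoin ⟨j, rfl⟩⟩
    refine ⟨Polynomial.X ^ 6 - Polynomial.C (b 0) * Polynomial.X ^ 4 +
      Polynomial.C (b 2 - b 0 ^ 2) * Polynomial.X ^ 2 - Polynomial.C (b 1 ^ 2), ?_, ?_⟩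
    · monicity!
    · have hb : ∀ j, algebraMap (Algebra.adjoin F3 (Set.range av)) S3 (b j) = av j := fun _ => rfl
      simp only [Polynomial.eval₂_add, Polynomial.eval₂_sub, Polynomial.eval₂_mul,
        Polynomial.eval₂_pow, Polynomial.eval₂_X, Polynomial.eval₂_C, map_sub, map_pow, hb,
        av_two_sub_av_zero_sq]
      rw [av_zero, av_one]
      fin_cases i <;> simp only [Fin.zero_eta, Fin.mk_one, Fin.reduceFinMk] <;> ring
  induction f using MvPolynomial.induction_on with
  | C c => exact isIntegral_algebraMap (x := algebraMap F3 (Algebra.adjoin F3 (Set.range av)) c)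
  | add p q hp hq => exact hp.add hq
  | mul_X p i hp => exact hp.mul (hX i)

theorem algebraicIndependent_av : AlgebraicIndependent F3 av := by
  have : Algebra.IsAlgebraic (Algebra.adjoin F3 (Set.range av)) S3 :=
    ⟨fun f => (isIntegral_adjoin_av f).isAlgebraic⟩
  refine (Algebra.IsAlgebraic.isTranscendenceBasis_of_le_trdeg_of_finite F3 av ?_).1
  rw [MvPolynomial.trdeg_of_isDomain]
  simp

theorem X_sq_sub_X_sq_ne_zero {i j : Fin 3} (hij : i ≠ j) : (X i ^ 2 - X j ^ 2 : S3) ≠ 0 := by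
  intro h
  have := congrArg (eval (Pi.single i (1 : F3))) h
  simp [hij.symm] at this

theorem rename_av (e : Equiv.Perm (Fin 3)) (i : Fin 3) : rename e (av i) = av i := by
  have h1 : ∑ i, (X (e i) ^ 2 : S3) = ∑ i, X i ^ 2 := Equiv.sum_comp e fun i => (X i ^ 2 : S3)
  have h2 : ∏ i, (X (e i) : S3) = ∏ i, X i := Equiv.prod_comp e fun i => (X i : S3)
  have h3 : ∑ i, (X (e i) ^ 4 : S3) = ∑ i, X i ^ 4 := Equiv.sum_comp e fun i => (X i ^ 4 : S3)
  simp only [Fin.sum_univ_three, Fin.prod_univ_three] at h1 h2 h3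
  fin_cases i
  · simpa [av_zero] using h1
  · simpa [av_one] using h2
  · simpa [av_two] using h3

theorem rename_aeval_av (e : Equiv.Perm (Fin 3)) (p : MvPolynomial (Fin 3) F3) :
    rename e (aeval av p) = aeval av p :=
  map_aeval_av (rename_av e) p

/-- `x₁, x₂x₃, x₁³` are linearly independent over `A`. -/
theorem eq_zero_of_three_term {p q r : MvPolynomial (Fin 3) F3}
    (h : aeval av p * X 0 + aeval av q * (X 1 * X 2) + aeval av r * X 0 ^ 3 = 0) :
    p = 0 ∧ q = 0 ∧ r = 0 := by
  have inj : ∀ s, aeval av s = 0 → s = 0 := fun s hs =>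
    (map_eq_zero_iff _ algebraicIndependent_av).mp hs
  have h1 := congrArg (rename (Equiv.swap (0 : Fin 3) 1)) h
  have h2 := congrArg (rename (Equiv.swap (0 : Fin 3) 2)) h
  simp only [map_add, map_mul, map_pow, rename_aeval_av, rename_X, map_zero,
    Equiv.swap_apply_left, Equiv.swap_apply_right,
    Equiv.swap_apply_of_ne_of_ne (show (2 : Fin 3) ≠ 0 by decide) (show (2 : Fin 3) ≠ 1 by decide),
    Equiv.swap_apply_of_ne_of_ne (show (1 : Fin 3) ≠ 0 by decide) (show (1 : Fin 3) ≠ 2 by decide)]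
    at h1 h2
  have e1 : aeval av p + aeval av r * (X 0 ^ 2 + X 1 ^ 2) = 0 := by
    refine (mul_eq_zero.mp ?_).resolve_left
      (X_sq_sub_X_sq_ne_zero (show (0 : Fin 3) ≠ 1 by decide))
    linear_combination X 0 * h - X 1 * h1
  have e2 : aeval av p + aeval av r * (X 0 ^ 2 + X 2 ^ 2) = 0 := by
    refine (mul_eq_zero.mp ?_).resolve_left
      (X_sq_sub_X_sq_ne_zero (show (0 : Fin 3) ≠ 2 by decide))
    linear_combination X 0 * h - X 2 * h2
  have hr : aeval av r = 0 := by
    refine (mul_eq_zero.mp ?_).resolve_right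
      (X_sq_sub_X_sq_ne_zero (show (1 : Fin 3) ≠ 2 by decide))
    linear_combination e1 - e2
  have hp : aeval av p = 0 := by rwa [hr, zero_mul, add_zero] at e1
  have hq : aeval av q = 0 := by
    rw [hp, hr, zero_mul, zero_mul, zero_add, add_zero] at h
    exact (mul_eq_zero.mp h).resolve_right (mul_ne_zero (X_ne_zero 1) (X_ne_zero 2))
  exact ⟨inj _ hp, inj _ hq, inj _ hr⟩

theorem eq_zero_of_Psi7_eq_zero {p : Fin 6 → MvPolynomial (Fin 3) F3} (h : Psi7 p = 0) :
    p = 0 := by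
  rw [Psi7_eq] at h
  have h' := congrArg (rename (Equiv.swap (1 : Fin 3) 2)) h
  simp only [map_add, map_mul, map_pow, rename_aeval_av, rename_X, map_zero,
    Equiv.swap_apply_left, Equiv.swap_apply_right,
    Equiv.swap_apply_of_ne_of_ne (show (0 : Fin 3) ≠ 1 by decide) (show (0 : Fin 3) ≠ 2 by decide)]
    at h'
  obtain ⟨h3, h4, h5⟩ := eq_zero_of_three_term (p := p 3) (q := p 4) (r := p 5) <| by
    refine (mul_eq_zero.mp ?_).resolve_left
      (X_sq_sub_X_sq_ne_zero (show (1 : Fin 3) ≠ 2 by decide))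
    linear_combination h - h'
  obtain ⟨h0, h1, h2⟩ := eq_zero_of_three_term (p := p 0) (q := p 1) (r := p 2) <| by
    simpa [h3, h4, h5] using h
  funext i
  fin_cases i <;> assumption

/-- `S^H_χ` is a free `A`-module with basis `{x₁, x₂x₃, x₁³, x₁x₂², x₂³x₃, x₁³x₂²}`:
the map `(p₁,…,p₆) ↦ ∑ᵢ pᵢ(a₁,a₂,a₃)·wᵢ` is injective, and its image is exactly the
set of `χ`-relative `H`-invariants. -/
theorem stmt7 :
    Function.Injective Psi7 ∧
    Set.range Psi7 = {f : S3 | ∀ h ∈ H3, actS h f = chi h • f} := by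
  refine ⟨fun p q h => sub_eq_zero.mp (eq_zero_of_Psi7_eq_zero ?_), Set.Subset.antisymm ?_ ?_⟩
  · rw [Psi7_sub, h, sub_self]
  · rintro _ ⟨p, rfl⟩ h hh
    exact Psi7_relInv p hh
  · exact fun f hf => mem_range_Psi7 hf
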